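/- Let X be a variety over an algebraically closed field k, V a finite-dimensional k-vector space (with its Zariski topology), and F a Zariski-closed subset of X × V such that for every x ∈ X the fibre F_x = {v ∈ V : (x,v) ∈ F} is a cone in V (i.e. contains 0 and is closed under multiplication by scalars in k). Then the function X → ℤ sending x to dim F_x is upper semicontinuous, i.e. {x ∈ X : dim F_x ≤ n} is open in X for every n. -/

import Mathlib

open MvPolynomial

noncomputable section

namespace Stmt9

/-- The Zariski topology on `ι → k`: closed sets are the zero loci of sets of polynomials. -/
def zariskiTopology (k : Type) [Field k] (ι : Type) : TopologicalSpace (ι → k) :=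
  TopologicalSpace.ofClosed
    {Z | ∃ S : Set (MvPolynomial ι k), Z = {x | ∀ p ∈ S, eval x p = 0}}
    ⟨{1}, by ext x; simp⟩
    (fun F hF => by
      choose S hS using fun Z (h : Z ∈ F) => hF h
      refine ⟨⋃ (Z : Set (ι → k)) (h : Z ∈ F), S Z h, ?_⟩
      ext x
      simp only [Set.mem_sInter, Set.mem_setOf_eq, Set.mem_iUnion]
      constructor
      · intro hx p hp
        obtain ⟨Z, hZ, hpZ⟩ := hp
        have := hx Z hZ
        rw [hS Z hZ] at this
        exact this p hpZ
      · intro hx Z hZ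
        rw [hS Z hZ]
        exact fun p hp => hx p ⟨Z, hZ, hp⟩)
    (fun Z₁ h₁ Z₂ h₂ => by
      obtain ⟨S, rfl⟩ := h₁
      obtain ⟨T, rfl⟩ := h₂
      refine ⟨Set.image2 (· * ·) S T, ?_⟩
      ext x
      simp only [Set.mem_union, Set.mem_setOf_eq, Set.mem_image2]
      constructor
      · rintro (h | h) q ⟨p, hp, r, hr, rfl⟩
        · rw [_root_.map_mul, h p hp, zero_mul]
        · rw [_root_.map_mul, h r hr, mul_zero]
      · intro h
        by_contra hc
        push_neg at hc
        obtain ⟨⟨p, hp, hpx⟩, ⟨q, hq, hqx⟩⟩ := hc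
        exact mul_ne_zero hpx hqx (by rw [← _root_.map_mul]; exact h _ ⟨p, hp, q, hq, rfl⟩))



section Alg
attribute [local instance] MvPolynomial.gradedAlgebra

lemma homComp_mem_span {σ R : Type*} [CommRing R] (Q : Set (MvPolynomial σ R))
    (hQ : ∀ q ∈ Q, ∃ d, q.IsHomogeneous d) {p : MvPolynomial σ R} (hp : p ∈ Ideal.span Q) (n : ℕ) :
    homogeneousComponent n p ∈ Ideal.span Q := by
  apply homogeneousComponent_mem_of_mem _ hp
  apply Ideal.homogeneous_span
  intro x hx
  obtain ⟨d, hd⟩ := hQ x hx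
  exact ⟨d, hd⟩

lemma homComp_mul {σ R : Type*} [CommRing R] {L : MvPolynomial σ R} {j : ℕ}
    (hL : L.IsHomogeneous j) (h : MvPolynomial σ R) (e : ℕ) :
    homogeneousComponent (e + j) (h * L) = homogeneousComponent e h * L := by
  have := DirectSum.coe_decompose_mul_add_of_right_mem (𝒜 := homogeneousSubmodule σ R)
    (a := h) (b := L) (i := e) (j := j) hL
  rw [← decomposition.decompose'_apply, ← decomposition.decompose'_apply]
  exact this
end Alg

lemma exists_deg {k : Type*} [Field k] [IsAlgClosed k] {ι : Type*} [Finite ι]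
    (Q : Set (MvPolynomial ι k)) (h : ∀ v : ι → k, (∀ q ∈ Q, eval v q = 0) → v = 0) :
    ∃ d, ∀ s : ι →₀ ℕ, d ≤ s.degree → (monomial s (1 : k)) ∈ Ideal.span Q := by
  have h1 : idealOfVars ι k ≤ (Ideal.span Q).radical := by
    rw [← vanishingIdeal_zeroLocus_eq_radical (K := k), idealOfVars, Ideal.span_le]
    rintro _ ⟨i, rfl⟩
    intro v hv
    have : v = 0 := h v fun q hq => by simpa using hv q (Ideal.subset_span hq)
    simp [this]
  obtain ⟨d, hd⟩ := Ideal.exists_pow_le_of_le_radical_of_fg h1 (idealOfVars_fg _ _)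
  exact ⟨d, fun s hs => hd ((monomial_mem_pow_idealOfVars_iff d s one_ne_zero).2 hs)⟩

lemma elim_local {k : Type*} [Field k] [IsAlgClosed k] {ι σ : Type*} [Finite ι]
    (Q : Set (MvPolynomial ι (MvPolynomial σ k)))
    (hQ : ∀ q ∈ Q, ∃ d, q.IsHomogeneous d) (u₀ : σ → k)
    (h : ∀ v : ι → k, (∀ q ∈ Q, eval v (map (eval u₀) q) = 0) → v = 0) :
    ∃ r : MvPolynomial σ k, eval u₀ r ≠ 0 ∧ ∀ u : σ → k, eval u r ≠ 0 →
      ∀ v : ι → k, (∀ q ∈ Q, eval v (map (eval u) q) = 0) → v = 0 := by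
  classical
  obtain ⟨d, hd⟩ := exists_deg ((map (eval u₀)) '' Q) (fun v hv => h v fun q hq => hv _ ⟨q, hq, rfl⟩)
  let P : Submodule (MvPolynomial σ k) (MvPolynomial ι (MvPolynomial σ k)) :=
    Submodule.span _ ((fun s => monomial s 1) '' {s : ι →₀ ℕ | s.degree = d})
  have hPfg : P.FG := Submodule.fg_span (Set.Finite.image _
    ((Finsupp.finite_of_degree_le d).subset fun s hs => le_of_eq hs))
  let J : Submodule (MvPolynomial σ k) (MvPolynomial ι (MvPolynomial σ k)) :=
    (Ideal.span Q).restrictScalars _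
  have hle : P ≤ J ⊔ (RingHom.ker (eval u₀)) • P := by
    apply Submodule.span_le.2
    rintro _ ⟨s, hs, rfl⟩
    have h1 := hd s (le_of_eq hs.symm)
    rw [← Ideal.map_span, Ideal.mem_map_iff_of_surjective _
      (map_surjective _ fun c => ⟨C c, by simp⟩)] at h1
    obtain ⟨g, hg, hgs⟩ := h1
    have hg' := homComp_mem_span Q hQ hg d
    have : (monomial s 1 : MvPolynomial ι (MvPolynomial σ k)) =
      homogeneousComponent d g + (monomial s 1 - homogeneousComponent d g) := by ring
    show (monomial s 1 : MvPolynomial ι (MvPolynomial σ k)) ∈ _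
    rw [this]
    refine Submodule.add_mem_sup hg' ?_
    set w := (monomial s 1 - homogeneousComponent d g) with hw
    rw [w.as_sum]
    refine Submodule.sum_mem _ fun t ht => ?_
    have hc : coeff t w ≠ 0 := by simpa using ht
    have htd : t.degree = d := by
      by_contra hne
      apply hc
      rw [hw, coeff_sub, coeff_homogeneousComponent, if_neg hne, coeff_monomial, if_neg]
      · simp
      · rintro rfl; exact hne hs
    have hm : coeff t w ∈ RingHom.ker (eval u₀) := by
      rw [RingHom.mem_ker, hw, coeff_sub, coeff_homogeneousComponent, if_pos htd, map_sub,
        ← coeff_map, ← coeff_map, hgs, map_monomial, map_one, sub_self]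
    have : monomial t (coeff t w) = coeff t w • (monomial t 1 : MvPolynomial ι (MvPolynomial σ k)) := by
      rw [smul_monomial, smul_eq_mul, mul_one]
    rw [this]
    exact Submodule.smul_mem_smul hm (Submodule.subset_span ⟨t, htd, rfl⟩)
  obtain ⟨r, hr, hrP⟩ := Submodule.exists_sub_one_mem_and_smul_le_of_fg_of_le_sup hPfg le_rfl hle
  refine ⟨r, ?_, fun u hu v hv => ?_⟩
  · rw [RingHom.mem_ker, map_sub, map_one, sub_eq_zero] at hr
    simp [hr]
  · funext i
    have h2 : r • (monomial (Finsupp.single i d) 1 : MvPolynomial ι (MvPolynomial σ k)) ∈ J :=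
      hrP (Submodule.smul_mem_pointwise_smul _ _ _
        (Submodule.subset_span ⟨_, by simp, rfl⟩))
    have h3 : Ideal.span Q ≤ RingHom.ker ((eval v).comp (map (eval u))) :=
      Ideal.span_le.2 fun q hq => hv q hq
    have h4 := h3 h2
    simp only [RingHom.mem_ker, RingHom.comp_apply, smul_monomial, map_monomial, eval_monomial,
      smul_eq_mul, mul_one] at h4
    simp only [mul_eq_zero, hu, false_or] at h4
    rw [Finsupp.prod_single_index (by simp)] at h4
    exact eq_zero_of_pow_eq_zero h4

/-- linear form as polynomial -/
def linPoly {k : Type*} [Field k] {ι : Type*} [Fintype ι] [DecidableEq ι] (l : (ι → k) →ₗ[k] k) :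
    MvPolynomial ι k := ∑ i, C (l (Pi.single i 1)) * X i

lemma linPoly_hom {k : Type*} [Field k] {ι : Type*} [Fintype ι] [DecidableEq ι]
    (l : (ι → k) →ₗ[k] k) : (linPoly l).IsHomogeneous 1 :=
  IsHomogeneous.sum _ _ _ fun i _ => by
    simpa using (isHomogeneous_C ι (l (Pi.single i 1))).mul (isHomogeneous_X k i)

lemma eval_linPoly {k : Type*} [Field k] {ι : Type*} [Fintype ι] [DecidableEq ι]
    (l : (ι → k) →ₗ[k] k) (v : ι → k) : eval v (linPoly l) = l v := by
  conv_rhs => rw [← Finset.univ_sum_single v]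
  rw [map_sum, linPoly, map_sum]
  refine Finset.sum_congr rfl fun i _ => ?_
  have : (Pi.single i (v i) : ι → k) = v i • Pi.single i 1 := by
    rw [← Pi.single_smul]; simp
  rw [this]; simp [mul_comm]

lemma eval_smul_hom {k : Type*} [Field k] {ι : Type*} {p : MvPolynomial ι k} {n : ℕ}
    (hp : p.IsHomogeneous n) (c : k) (v : ι → k) : eval (c • v) p = c ^ n * eval v p := by
  rw [eval_eq, eval_eq, Finset.mul_sum]
  refine Finset.sum_congr rfl fun d hd => ?_
  have h1 : d.degree = n := by
    rw [Finsupp.degree_eq_weight_one]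
    exact hp (by simpa using hd)
  simp only [Pi.smul_apply, smul_eq_mul, mul_pow, Finset.prod_mul_distrib]
  rw [Finset.prod_pow_eq_pow_sum, ← h1, Finsupp.degree_apply]
  ring

/-- homogeneous components vanish on scaled zeros -/
lemma homComp_eval_zero {k : Type*} [Field k] [Infinite k] {ι : Type*} (p : MvPolynomial ι k)
    (v : ι → k) (h : ∀ c : k, eval (c • v) p = 0) (n : ℕ) :
    eval v (homogeneousComponent n p) = 0 := by
  let f : Polynomial k := ∑ i ∈ Finset.range (p.totalDegree + 1),
    Polynomial.monomial i (eval v (homogeneousComponent i p))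
  have hf : f = 0 := by
    apply Polynomial.funext
    intro c
    rw [Polynomial.eval_zero, ← h c]
    conv_rhs => rw [← sum_homogeneousComponent p]
    simp only [f, Polynomial.eval_finsetSum, map_sum, Polynomial.eval_monomial]
    refine Finset.sum_congr rfl fun i _ => ?_
    rw [eval_smul_hom (homogeneousComponent_isHomogeneous i p), mul_comm]
  by_cases hn : n < p.totalDegree + 1
  · have : f.coeff n = eval v (homogeneousComponent n p) := by
      simp only [f, Polynomial.finsetSum_coeff, Polynomial.coeff_monomial]
      simp [hn]
    rw [← this, hf]; simp
  · rw [homogeneousComponent_eq_zero _ _ (by omega)]; simp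

section Dim

attribute [local instance] zariskiTopology

open TopologicalSpace

lemma isClosed_zar {k ι : Type} [Field k] (Z : Set (ι → k)) :
    IsClosed Z ↔ ∃ S : Set (MvPolynomial ι k), Z = {x | ∀ p ∈ S, eval x p = 0} := by
  rw [← isOpen_compl_iff]
  change Zᶜᶜ ∈ _ ↔ _
  rw [compl_compl]
  rfl

lemma isClosed_zeros {k ι : Type} [Field k] (S : Set (MvPolynomial ι k)) :
    IsClosed {x : ι → k | ∀ p ∈ S, eval x p = 0} := (isClosed_zar _).2 ⟨S, rfl⟩

lemma isClosed_zeros_one {k ι : Type} [Field k] (p : MvPolynomial ι k) :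
    IsClosed {x : ι → k | eval x p = 0} := (isClosed_zar _).2 ⟨{p}, by simp⟩

lemma isClosed_single {k ι : Type} [Field k] (a : ι → k) : IsClosed ({a} : Set (ι → k)) := by
  refine (isClosed_zar _).2 ⟨Set.range fun i => X i - C (a i), ?_⟩
  ext x
  simp [sub_eq_zero, funext_iff]

lemma mem_iff_vanishing {k ι : Type} [Field k] {Z : Set (ι → k)} (hZ : IsClosed Z) (v : ι → k) :
    v ∈ Z ↔ ∀ p ∈ vanishingIdeal k Z, eval v p = 0 := by
  constructor
  · intro hv p hp
    simpa using hp v hv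
  · intro h
    obtain ⟨S, rfl⟩ := (isClosed_zar _).1 hZ
    intro p hp
    exact h p fun x hx => by simpa using hx p hp

lemma subset_of_vanishing {k ι : Type} [Field k] {Z Z' : Set (ι → k)} (hZ : IsClosed Z)
    (h : vanishingIdeal k Z ≤ vanishingIdeal k Z') : Z' ⊆ Z := fun v hv =>
  (mem_iff_vanishing hZ v).2 fun p hp => by simpa using h hp v hv

instance noeth {k ι : Type} [Field k] [Finite ι] : NoetherianSpace (ι → k) := by
  apply ((noetherianSpace_TFAE (ι → k)).out 0 1).2
  let f : Closeds (ι → k) → (Ideal (MvPolynomial ι k))ᵒᵈ := fun Z =>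
    OrderDual.toDual (vanishingIdeal k (Z : Set (ι → k)))
  have hf : StrictMono f := by
    intro Z Z' h
    refine lt_of_le_of_ne (vanishingIdeal_anti_mono h.le) fun he => ?_
    have he' : vanishingIdeal k (Z : Set (ι → k)) = vanishingIdeal k (Z' : Set (ι → k)) := he
    exact h.not_ge (subset_of_vanishing Z.isClosed he'.le)
  exact hf.wellFoundedLT

lemma vanishing_prime {k ι : Type} [Field k] {Z : Set (ι → k)} (hZ : IsIrreducible Z) :
    (vanishingIdeal k Z).IsPrime := by
  refine Ideal.isPrime_iff.2 ⟨?_, ?_⟩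
  · rw [Ideal.ne_top_iff_one]
    intro h
    obtain ⟨v, hv⟩ := hZ.nonempty
    simpa using h v hv
  · intro p q hpq
    have := isPreirreducible_iff_isClosed_union_isClosed.1 hZ.isPreirreducible _ _
      (isClosed_zeros_one p) (isClosed_zeros_one q) (fun v hv => by
        have := hpq v hv
        simpa using this)
    rcases this with h | h
    · exact Or.inl fun v hv => by simpa using h hv
    · exact Or.inr fun v hv => by simpa using h hv

/-- dimension bound in terms of chains in the ambient space -/
def DimLE {T : Type} [TopologicalSpace T] (C : Set T) (N : ℕ) : Prop :=
  ∀ p : LTSeries (IrreducibleCloseds T), ((p.last : IrreducibleCloseds T) : Set T) ⊆ C →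
    p.length ≤ N

lemma dimLE_iff {T : Type} [TopologicalSpace T] {C : Set T} (hC : IsClosed C) (N : ℕ) :
    topologicalKrullDim C ≤ ((N : ℕ∞) : WithBot ℕ∞) ↔ DimLE C N := by
  constructor
  · intro h p hp
    have hsub : ∀ i, (p i : Set T) ⊆ C := fun i =>
      Set.Subset.trans (LTSeries.monotone p (Fin.le_last i)) hp
    let q : LTSeries (IrreducibleCloseds C) :=
      { length := p.length
        toFun := fun i => ⟨Subtype.val ⁻¹' (p i : Set T), by
          constructor
          · obtain ⟨x, hx⟩ := (p i).isIrreducible.nonempty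
            exact ⟨⟨x, hsub i hx⟩, hx⟩
          · rintro _ _ ⟨u, hu, rfl⟩ ⟨v, hv, rfl⟩ ⟨x, hx, hxu⟩ ⟨y, hy, hyv⟩
            obtain ⟨z, hz, hzuv⟩ := (p i).isIrreducible.isPreirreducible u v hu hv
              ⟨x, hx, hxu⟩ ⟨y, hy, hyv⟩
            exact ⟨⟨z, hsub i hz⟩, hz, hzuv⟩, (p i).isClosed.preimage continuous_subtype_val⟩
        step := fun i => by
          have h1 := p.step i
          have h1' : p.toFun i.castSucc < p.toFun i.succ := h1
          change (_ : IrreducibleCloseds C) < _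
          refine lt_of_le_not_ge (fun x hx => h1'.le hx) fun h2 => h1'.not_ge fun x hx => ?_
          exact @h2 ⟨x, hsub _ hx⟩ hx }
    have h3 := (Order.LTSeries.length_le_krullDim q).trans h
    exact_mod_cast h3
  · intro h
    refine iSup_le fun p => ?_
    have h1 := h (p.map _ (IrreducibleCloseds.map_strictMono_of_isInducing
      (Topology.IsInducing.subtypeVal (t := C)))) (by
        rw [LTSeries.last_map]
        exact closure_minimal (by rintro _ ⟨x, _, rfl⟩; exact x.2) hC)
    have h2 : p.length ≤ N := h1
    exact_mod_cast h2

lemma DimLE.snoc {T : Type} [TopologicalSpace T] {C : Set T} {N : ℕ} (h : DimLE C N)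
    (p : LTSeries (IrreducibleCloseds T)) (Z : IrreducibleCloseds T) (hp : p.last < Z)
    (hZ : (Z : Set T) ⊆ C) : p.length + 1 ≤ N := by
  have h1 := h (RelSeries.snoc p Z hp) (by
    have h2 : (RelSeries.snoc p Z hp).last = Z := RelSeries.last_snoc p Z hp
    rw [h2]; exact hZ)
  exact h1

lemma finite_of {A B : Type*} [CommRing A] [CommRing B] (φ : A →+* B) (G : Set B) (hG : G.Finite)
    (h : ∀ M : AddSubmonoid B, G ⊆ M → (∀ a, ∀ x ∈ M, φ a * x ∈ M) → ∀ x, x ∈ M) : φ.Finite := by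
  algebraize [φ]
  refine ⟨⟨hG.toFinset, ?_⟩⟩
  rw [eq_top_iff]
  rintro x -
  rw [hG.coe_toFinset]
  refine h (Submodule.span A G).toAddSubmonoid Submodule.subset_span (fun a x hx => ?_) x
  have := (Submodule.span A G).smul_mem a hx
  rwa [Algebra.smul_def] at this

lemma exists_forms {k ι : Type} [Field k] [Infinite k] [Finite ι] (N : ℕ) :
    ∀ (C : Set (ι → k)), IsClosed C → (∀ (c : k), ∀ v ∈ C, c • v ∈ C) → DimLE C N →
    ∃ l : Fin N → ((ι → k) →ₗ[k] k), ∀ v ∈ C, (∀ i, l i v = 0) → v = 0 := by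
  classical
  have := Fintype.ofFinite ι
  induction N with
  | zero =>
    intro C hC hcone hdim
    refine ⟨Fin.elim0, fun v hv _ => ?_⟩
    obtain ⟨S, hSf, hSc, hSi, rfl⟩ := NoetherianSpace.exists_finite_set_isClosed_irreducible hC
    by_contra hv0
    have hfin : (⋃₀ S).Finite := by
      refine hSf.sUnion fun t ht => ?_
      obtain ⟨a, ha⟩ := (hSi t ht).nonempty
      by_contra hinf
      have hlt : (⟨{a}, isIrreducible_singleton, isClosed_single a⟩ : IrreducibleCloseds (ι → k)) <
          ⟨t, hSi t ht, hSc t ht⟩ := by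
        refine lt_of_le_not_ge (fun x hx => ?_) fun h => hinf ?_
        · have : x = a := hx
          rw [this]; exact ha
        · exact (Set.finite_singleton a).subset h
      have := hdim.snoc (RelSeries.singleton _ _) ⟨t, hSi t ht, hSc t ht⟩ hlt
        (Set.subset_sUnion_of_mem ht)
      omega
    refine Set.infinite_of_injective_forall_mem (f := fun c : k => c • v) ?_ (fun c => hcone c v hv)
      hfin
    exact smul_left_injective k hv0
  | succ N ih =>
    intro C hC hcone hdim
    obtain ⟨S, hSf, hSc, hSi, hSU⟩ := NoetherianSpace.exists_finite_set_isClosed_irreducible hC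
    have hpt : ∀ t : {t // t ∈ S ∧ ¬ t ⊆ {0}}, ∃ v ∈ t.1, v ≠ 0 := fun t => by
      have := t.2.2
      simpa [Set.subset_def] using this
    choose w hw hw0 using hpt
    have : Finite {t // t ∈ S ∧ ¬ t ⊆ {0}} := (hSf.subset fun t ht => ht.1 :
      {t | t ∈ S ∧ ¬ t ⊆ {0}}.Finite)
    obtain ⟨f, hf⟩ := Module.exists_dual_forall_apply_ne_zero (K := k) w hw0
    have hcl : IsClosed {v : ι → k | f v = 0} := by
      have := isClosed_zeros_one (linPoly f)
      simpa only [eval_linPoly] using this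
    obtain ⟨l, hl⟩ := ih (C ∩ {v | f v = 0}) (hC.inter hcl)
      (fun c v hv => ⟨hcone c v hv.1, by
        have : f v = 0 := hv.2
        simp [this]⟩) (by
        intro p hp
        have hpC : ((p.last : IrreducibleCloseds _) : Set (ι → k)) ⊆ C :=
          fun x hx => (hp hx).1
        obtain ⟨t, htS, ht⟩ := isIrreducible_iff_sUnion_isClosed.1 p.last.isIrreducible hSf.toFinset
          (fun z hz => hSc z (by simpa using hz)) (by simpa [← hSU] using hpC)
        replace htS : t ∈ S := by simpa using htS
        by_cases ht0 : t ⊆ {0}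
        · by_contra hlen
          have hlt : p.head < p.last := by
            apply LTSeries.strictMono p
            simp [Fin.lt_def]
            omega
          apply hlt.not_ge
          intro x hx
          obtain ⟨y, hy⟩ := p.head.isIrreducible.nonempty
          have hx0 : x = 0 := ht0 (ht hx)
          have hy0 : y = 0 := ht0 (ht (hlt.le hy))
          rw [hx0, ← hy0]; exact hy
        · have hlt : p.last < (⟨t, hSi t htS, hSc t htS⟩ : IrreducibleCloseds (ι → k)) := by
            refine lt_of_le_not_ge ht fun h => ?_
            exact hf ⟨t, htS, ht0⟩ (hp (h (hw ⟨t, htS, ht0⟩))).2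
          have := hdim.snoc p _ hlt (by
            rw [hSU]
            exact Set.subset_sUnion_of_mem htS)
          omega)
    refine ⟨Fin.cons f l, fun v hv h => hl v ⟨hv, by simpa using h 0⟩ fun i => by
      simpa using h i.succ⟩

lemma dimLE_of_forms {k ι : Type} [Field k] [IsAlgClosed k] [Finite ι] (N : ℕ)
    (C : Set (ι → k)) (hC : IsClosed C) (hcone : ∀ (c : k), ∀ v ∈ C, c • v ∈ C)
    (l : Fin N → ((ι → k) →ₗ[k] k)) (hl : ∀ v ∈ C, (∀ i, l i v = 0) → v = 0) : DimLE C N := by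
  classical
  have := Fintype.ofFinite ι
  have : Infinite k := IsAlgClosed.instInfinite
  let J := vanishingIdeal k C
  have hJh : ∀ p ∈ J, ∀ n, homogeneousComponent n p ∈ J := by
    intro p hp n v hv
    have := homComp_eval_zero p v (fun c => by simpa using hp _ (hcone c v hv)) n
    simpa using this
  let L : Fin N → MvPolynomial ι k := fun i => linPoly (l i)
  obtain ⟨d, hd⟩ := exists_deg ((J : Set (MvPolynomial ι k)) ∪ Set.range L) (fun v hv => by
    refine hl v ((mem_iff_vanishing hC v).2 fun p hp => hv p (Or.inl hp)) fun i => ?_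
    rw [← eval_linPoly]
    exact hv _ (Or.inr ⟨i, rfl⟩))
  rw [Ideal.span_union, Ideal.span_eq] at hd
  let ψ : MvPolynomial (Fin N) k →+* MvPolynomial ι k := (aeval L).toRingHom
  let φ : MvPolynomial (Fin N) k →+* MvPolynomial ι k ⧸ J := (Ideal.Quotient.mk J).comp ψ
  have hφ : φ.IsIntegral := by
    apply RingHom.Finite.to_isIntegral
    refine finite_of φ ((fun s => Ideal.Quotient.mk J (monomial s 1)) ''
        {s : ι →₀ ℕ | s.degree ≤ d}) ((Finsupp.finite_of_degree_le d).image _) fun M hGM hM => ?_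
    have hsmM : ∀ (a : MvPolynomial (Fin N) k) (x : MvPolynomial ι k),
        Ideal.Quotient.mk J x ∈ M → Ideal.Quotient.mk J (ψ a * x) ∈ M := fun a x hx => by
      rw [map_mul]; exact hM a _ hx
    have hmon : ∀ e, ∀ s : ι →₀ ℕ, s.degree = e → Ideal.Quotient.mk J (monomial s 1) ∈ M := by
      intro e
      induction e using Nat.strong_induction_on with
      | _ e ih =>
        intro s hs
        by_cases hed : e ≤ d
        · exact hGM ⟨s, by simpa [hs] using hed, rfl⟩
        obtain ⟨e, rfl⟩ : ∃ e', e = e' + 1 := ⟨e - 1, by omega⟩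
        obtain ⟨a, ha, b, hb, hab⟩ := Submodule.mem_sup.1 (hd s (by omega))
        obtain ⟨g, rfl⟩ := Ideal.mem_span_range_iff_exists_fun.1 hb
        have h1 := congrArg (homogeneousComponent (e + 1)) hab
        rw [homogeneousComponent_eq_self (isHomogeneous_monomial 1 hs), map_add, map_sum] at h1
        rw [← h1, map_add, Ideal.Quotient.eq_zero_iff_mem.2 (hJh a ha _), zero_add, map_sum]
        refine AddSubmonoid.sum_mem M fun i _ => ?_
        rw [homComp_mul (linPoly_hom (l i)), mul_comm]
        have hL : L i = ψ (X i) := by simp [ψ]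
        change Ideal.Quotient.mk J (L i * _) ∈ M
        rw [hL]
        apply hsmM
        rw [homogeneousComponent_apply, map_sum]
        refine AddSubmonoid.sum_mem M fun t ht => ?_
        have htd : t.degree = e := (Finset.mem_filter.1 ht).2
        have : monomial t (coeff t (g i)) = ψ (MvPolynomial.C (coeff t (g i))) * monomial t 1 := by
          simp [ψ, C_mul_monomial]
        rw [this]
        exact hsmM _ _ (ih e (by omega) t htd)
    intro x
    obtain ⟨x, rfl⟩ := Ideal.Quotient.mk_surjective x
    rw [x.as_sum, map_sum]
    refine AddSubmonoid.sum_mem M fun t _ => ?_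
    have : monomial t (coeff t x) = ψ (MvPolynomial.C (coeff t x)) * monomial t 1 := by
      simp [ψ, C_mul_monomial]
    rw [this]
    exact hsmM _ _ (hmon _ t rfl)
  intro p hp
  have hsub : ∀ i, (p i : Set (ι → k)) ⊆ C := fun i =>
    Set.Subset.trans (LTSeries.monotone p (Fin.le_last i)) hp
  let q : LTSeries (PrimeSpectrum (MvPolynomial (Fin N) k))ᵒᵈ :=
    { length := p.length
      toFun := fun i => OrderDual.toDual
        ⟨(vanishingIdeal k (p i : Set (ι → k))).comap ψ,
          (vanishing_prime (p i).isIrreducible).comap ψ⟩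
      step := fun i => by
        have h1 : p.toFun i.castSucc < p.toFun i.succ := p.step i
        change (vanishingIdeal k (p.toFun i.succ : Set (ι → k))).comap ψ <
          (vanishingIdeal k (p.toFun i.castSucc : Set (ι → k))).comap ψ
        have hle := vanishingIdeal_anti_mono (k := k) h1.le
        have hnle : ¬ vanishingIdeal k (p.toFun i.castSucc : Set (ι → k)) ≤
            vanishingIdeal k (p.toFun i.succ : Set (ι → k)) := fun h =>
          h1.not_ge (subset_of_vanishing (p.toFun i.castSucc).isClosed h)
        obtain ⟨x, hx, hx'⟩ := Set.not_subset.1 hnle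
        have := vanishing_prime (k := k) (p.toFun i.succ).isIrreducible
        obtain ⟨f, hfm, hf⟩ := hφ (Ideal.Quotient.mk J x)
        obtain ⟨j, hj, hj'⟩ := Ideal.exists_coeff_mem_comap_sdiff_comap_of_root_mem_sdiff
          (f := ψ) hle ⟨hx, hx'⟩ (p := f) (by
            have : Nontrivial (MvPolynomial (Fin N) k ⧸
              (vanishingIdeal k (p.toFun i.succ : Set (ι → k))).comap ψ) :=
              Ideal.Quotient.nontrivial_iff.2 (this.comap ψ).ne_top
            exact (hfm.map _).ne_zero) (by
            rw [← Polynomial.hom_eval₂, Ideal.Quotient.eq_zero_iff_mem] at hf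
            exact vanishingIdeal_anti_mono (hsub _) hf)
        exact SetLike.lt_iff_le_and_exists.2 ⟨Ideal.comap_mono hle, _, hj, hj'⟩ }
  have h1 := Order.LTSeries.length_le_krullDim q
  rw [Order.krullDim_orderDual] at h1
  have h2 : ringKrullDim (MvPolynomial (Fin N) k) = N := by
    rw [MvPolynomial.ringKrullDim_of_isNoetherianRing, ringKrullDim_eq_zero_of_field]
    simp
  have h3 := h1.trans_eq h2
  exact_mod_cast h3

/-- view a polynomial in two groups of variables as a polynomial with polynomial coefficients -/
def splitPoly {k σ ι : Type} [Field k] :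
    MvPolynomial (σ ⊕ ι) k →ₐ[k] MvPolynomial ι (MvPolynomial σ k) :=
  aeval (Sum.elim (fun s => C (X s)) (fun i => X i))

lemma eval_splitPoly {k σ ι : Type} [Field k] (u : σ → k) (v : ι → k)
    (p : MvPolynomial (σ ⊕ ι) k) :
    eval v (map (eval u) (splitPoly p)) = eval (Sum.elim u v) p := by
  induction p using MvPolynomial.induction_on with
  | C a => simp [splitPoly, MvPolynomial.algebraMap_apply]
  | add p q hp hq => simp [hp, hq]
  | mul_X p i hp =>
    rw [map_mul, map_mul, map_mul, map_mul, hp]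
    cases i <;> simp [splitPoly]

lemma map_homComp {A B ι : Type} [CommRing A] [CommRing B] (f : A →+* B) (n : ℕ)
    (p : MvPolynomial ι A) :
    map f (homogeneousComponent n p) = homogeneousComponent n (map f p) := by
  ext t
  rw [coeff_map, coeff_homogeneousComponent, coeff_homogeneousComponent, coeff_map]
  split_ifs <;> simp

lemma elim_open {k σ ι : Type} [Field k] [IsAlgClosed k] [Finite ι]
    (S : Set (MvPolynomial (σ ⊕ ι) k)) {N : ℕ} (l : Fin N → ((ι → k) →ₗ[k] k)) :
    IsOpen {u : σ → k | ∀ v : ι → k, (∀ c : k, ∀ p ∈ S, eval (Sum.elim u (c • v)) p = 0) →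
      (∀ i, l i v = 0) → v = 0} := by
  classical
  have := Fintype.ofFinite ι
  have : Infinite k := IsAlgClosed.instInfinite
  let Q : Set (MvPolynomial ι (MvPolynomial σ k)) :=
    {q | ∃ p ∈ S, ∃ d, q = homogeneousComponent d (splitPoly p)} ∪
      Set.range fun i => map C (linPoly (l i))
  have hQ : ∀ q ∈ Q, ∃ d, q.IsHomogeneous d := by
    rintro q (⟨p, _, d, rfl⟩ | ⟨i, rfl⟩)
    · exact ⟨d, homogeneousComponent_isHomogeneous d _⟩
    · exact ⟨1, (linPoly_hom (l i)).map _⟩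
  have key : ∀ (u : σ → k) (v : ι → k), (∀ q ∈ Q, eval v (map (eval u) q) = 0) ↔
      ((∀ c : k, ∀ p ∈ S, eval (Sum.elim u (c • v)) p = 0) ∧ ∀ i, l i v = 0) := by
    intro u v
    have hlin : ∀ i, eval v (map (eval u) (map C (linPoly (l i)))) = l i v := by
      intro i
      rw [MvPolynomial.map_map, ← eval_linPoly]
      congr 1
      convert! MvPolynomial.map_id _
      ext x
      simp
    constructor
    · intro h
      refine ⟨fun c p hp => ?_, fun i => ?_⟩
      · rw [← eval_splitPoly, ← sum_homogeneousComponent (map (eval u) (splitPoly p)), map_sum]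
        refine Finset.sum_eq_zero fun i _ => ?_
        rw [eval_smul_hom (homogeneousComponent_isHomogeneous i _), ← map_homComp,
          h _ (Or.inl ⟨p, hp, i, rfl⟩), mul_zero]
      · rw [← hlin]; exact h _ (Or.inr ⟨i, rfl⟩)
    · rintro ⟨h1, h2⟩ q (⟨p, hp, d, rfl⟩ | ⟨i, rfl⟩)
      · rw [map_homComp]
        exact homComp_eval_zero _ _ (fun c => by rw [eval_splitPoly]; exact h1 c p hp) _
      · rw [hlin]; exact h2 i
  rw [isOpen_iff_forall_mem_open]
  intro u₀ hu₀
  obtain ⟨r, hr0, hr⟩ := elim_local Q hQ u₀ fun v hv =>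
    hu₀ v ((key u₀ v).1 hv).1 ((key u₀ v).1 hv).2
  refine ⟨{u | eval u r ≠ 0}, fun u hu v h1 h2 => hr u hu v ((key u v).2 ⟨h1, h2⟩), ?_, hr0⟩
  exact (isClosed_zeros_one r).isOpen_compl

lemma isClosed_fibre {k σ ι : Type} [Field k] (S : Set (MvPolynomial (σ ⊕ ι) k)) (u : σ → k) :
    IsClosed {v : ι → k | ∀ p ∈ S, eval (Sum.elim u v) p = 0} := by
  refine (isClosed_zar _).2 ⟨(fun p => map (eval u) (splitPoly p)) '' S, ?_⟩
  ext v
  simp only [Set.mem_ofPred_eq, Set.forall_mem_image, eval_splitPoly]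

lemma dim_fibre_iff {k ι : Type} [Field k] [IsAlgClosed k] [Finite ι] (N : ℕ)
    (C : Set (ι → k)) (hC : IsClosed C) (hcone : ∀ (c : k), ∀ v ∈ C, c • v ∈ C) :
    topologicalKrullDim C ≤ ((N : ℕ∞) : WithBot ℕ∞) ↔
    ∃ l : Fin N → ((ι → k) →ₗ[k] k), ∀ v ∈ C, (∀ i, l i v = 0) → v = 0 := by
  have : Infinite k := IsAlgClosed.instInfinite
  rw [dimLE_iff hC]
  exact ⟨exists_forms N C hC hcone, fun ⟨l, hl⟩ => dimLE_of_forms N C hC hcone l hl⟩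

end Dim

open scoped LinearAlgebra.Projectivization

variable (k : Type) [Field k]

/-- The Zariski topology on projective `n`-space over `k`, as the quotient topology of the
Zariski topology on the set of nonzero vectors. -/
instance projTopology (n : ℕ) : TopologicalSpace (ℙ k (Fin (n + 1) → k)) :=
  ((zariskiTopology k (Fin (n + 1))).induced
    (Subtype.val : {v : Fin (n + 1) → k // v ≠ 0} → (Fin (n + 1) → k))).coinduced
      (Projectivization.mk' k)

/-- The Zariski topology on the product of projective `n`-space with the affine space
`ι → k`, again realized as a quotient of the Zariski topology upstairs. -/
def projProdTopology (n : ℕ) (ι : Type) :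
    TopologicalSpace (ℙ k (Fin (n + 1) → k) × (ι → k)) :=
  ((zariskiTopology k (Fin (n + 1) ⊕ ι)).induced
    (fun p : {v : Fin (n + 1) → k // v ≠ 0} × (ι → k) =>
      Sum.elim (p.1 : Fin (n + 1) → k) p.2)).coinduced
    (fun p => (Projectivization.mk' k p.1, p.2))

/-- for a variety `X` (a locally closed subset of projective space; affine
space embeds as an open subset of projective space, so locally closed subsets of affine
space are also covered), a finite-dimensional vector space `V = (ι → k)` with its Zariski
topology, and a closed subset `F` of `X × V` all of whose fibres `F_x` (`x ∈ X`) are cones,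
the function `x ↦ dim F_x` is upper semicontinuous on `X`. -/
theorem dim_cone_fibres_upperSemicontinuous
    [IsAlgClosed k] (n : ℕ) (ι : Type) [Fintype ι]
    (X : Set (ℙ k (Fin (n + 1) → k))) (hX : IsLocallyClosed X)
    (F : Set (ℙ k (Fin (n + 1) → k) × (ι → k)))
    (hFsub : F ⊆ X ×ˢ (Set.univ : Set (ι → k)))
    (hFclosed : ∃ F' : Set (ℙ k (Fin (n + 1) → k) × (ι → k)),
      @IsClosed _ (projProdTopology k n ι) F' ∧ F = F' ∩ (X ×ˢ Set.univ))
    (hcone : ∀ x ∈ X, (x, (0 : ι → k)) ∈ F ∧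
      ∀ (c : k) (v : ι → k), (x, v) ∈ F → (x, c • v) ∈ F) :
    ∀ N : ℕ, IsOpen {x : X |
      @topologicalKrullDim {v : ι → k // ((x : ℙ k (Fin (n + 1) → k)), v) ∈ F}
          ((zariskiTopology k ι).induced Subtype.val)
        ≤ ((N : ℕ∞) : WithBot ℕ∞)} := by
  intro N
  letI := zariskiTopology k (Fin (n + 1) ⊕ ι)
  letI := zariskiTopology k (Fin (n + 1))
  obtain ⟨F', hF', hFF'⟩ := hFclosed
  obtain ⟨Z, hZ, hZF⟩ := isClosed_induced_iff.1 (isClosed_coinduced.1 hF')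
  obtain ⟨S, rfl⟩ := (isClosed_zar Z).1 hZ
  have hS : ∀ (u : {v : Fin (n + 1) → k // v ≠ 0}) (v : ι → k),
      (Projectivization.mk' k u, v) ∈ F' ↔ ∀ p ∈ S, eval (Sum.elim u.1 v) p = 0 := fun u v =>
    (Set.ext_iff.1 hZF (u, v)).symm
  let O : Set (ℙ k (Fin (n + 1) → k)) := {x | ∃ l : Fin N → ((ι → k) →ₗ[k] k),
    ∀ v : ι → k, (∀ c : k, (x, c • v) ∈ F') → (∀ i, l i v = 0) → v = 0}
  have hO : IsOpen O := by
    refine isOpen_coinduced.2 (isOpen_induced_iff.2 ⟨_, @isOpen_iUnion _ _ (zariskiTopology k _) _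
      fun l : Fin N → ((ι → k) →ₗ[k] k) => elim_open S l, ?_⟩)
    ext u
    simp only [O, Set.mem_preimage, Set.mem_iUnion, Set.mem_ofPred_eq, hS]
  refine isOpen_induced_iff.2 ⟨O, hO, ?_⟩
  ext ⟨x, hx⟩
  have hxF : ∀ v, (x, v) ∈ F ↔ (x, v) ∈ F' := fun v => by
    rw [hFF']; simp [hx]
  have hcl : @IsClosed _ (zariskiTopology k ι) {v : ι → k | (x, v) ∈ F} := by
    have h1 := isClosed_fibre (ι := ι) S x.rep
    have h2 : {v : ι → k | (x, v) ∈ F} = {v : ι → k | ∀ p ∈ S, eval (Sum.elim x.rep v) p = 0} := by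
      ext v
      have h3 := hS ⟨x.rep, x.rep_nonzero⟩ v
      have h4 : Projectivization.mk' k ⟨x.rep, x.rep_nonzero⟩ = x := by
        rw [Projectivization.mk'_eq_mk]; exact x.mk_rep
      rw [h4] at h3
      exact (hxF v).trans h3
    rw [h2]; exact h1
  have h5 := dim_fibre_iff N {v : ι → k | (x, v) ∈ F} hcl fun c v hv => (hcone x hx).2 c v hv
  refine Iff.trans ?_ h5.symm
  have hall : ∀ v, (∀ c : k, (x, c • v) ∈ F') ↔ (x, v) ∈ F := fun v =>
    ⟨fun h => (hxF v).2 (by simpa using h 1), fun h c => (hxF _).1 ((hcone x hx).2 c v h)⟩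
  simp only [O, Set.mem_preimage, Set.mem_ofPred_eq, hall]

end Stmt9
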